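/- Let α and β be two commuting strongly continuous one-parameter isometric representations on a Banach space E (α_s β_t = β_t α_s for all s, t), and define γ_t = α_t β_t. Then for every z ∈ ℂ, the operator compositions α_z ∘ β_z and β_z ∘ α_z are closable, their closures coincide, and both closures equal the analytic continuation γ_z. -/

import Mathlib

open Complex MeasureTheory Filter Topology Set

noncomputable section

/-- The closed horizontal strip between the real axis and the line `Im = z.im`. -/
def hStrip (z : ℂ) : Set ℂ := {y : ℂ | y.im ∈ Set.uIcc 0 z.im}

/-- A strongly continuous one-parameter (contractive, hence isometric) representation. -/
structure IsOneParamRep {E : Type*} [NormedAddCommGroup E] [NormedSpace ℂ E]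
    (α : ℝ → E →L[ℂ] E) : Prop where
  map_add : ∀ s t : ℝ, α (s + t) = (α s).comp (α t)
  map_zero : α 0 = ContinuousLinearMap.id ℂ E
  norm_le : ∀ t : ℝ, ‖α t‖ ≤ 1
  strong_cont : ∀ a : E, Continuous fun t : ℝ => α t a

/-- `(a, b)` lies in the graph of the analytic continuation `α_z`:  there is a function `f`,
continuous on the strip `S(z)`, analytic in its interior, agreeing with `t ↦ α_t a` on `ℝ`,
with `f z = b`. -/
def HasContVal {E : Type*} [NormedAddCommGroup E] [NormedSpace ℂ E]
    (α : ℝ → E →L[ℂ] E) (z : ℂ) (a b : E) : Prop :=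
  ∃ f : ℂ → E, ContinuousOn f (hStrip z) ∧
    DifferentiableOn ℂ f (interior (hStrip z)) ∧
    (∀ t : ℝ, f t = α t a) ∧ f z = b

/-- Continuous on `S` and holomorphic in the interior of `S`. -/
def IsRegularOn {E : Type*} [NormedAddCommGroup E] [NormedSpace ℂ E]
    (f : ℂ → E) (S : Set ℂ) : Prop :=
  ContinuousOn f S ∧ DifferentiableOn ℂ f (interior S)

section Strip

lemma add_ofReal_mem_hStrip {z w : ℂ} (hw : w ∈ hStrip z) (s : ℝ) : w + s ∈ hStrip z := by
  simpa [hStrip] using hw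

lemma ofReal_mem_hStrip (z : ℂ) (s : ℝ) : (s : ℂ) ∈ hStrip z := by
  simp [hStrip]

lemma self_mem_hStrip (z : ℂ) : z ∈ hStrip z := by
  simp [hStrip]

lemma mem_hStrip_iff_exists {z w : ℂ} :
    w ∈ hStrip z ↔ ∃ θ ∈ Set.Icc (0 : ℝ) 1, w.im = θ * z.im := by
  rw [hStrip, Set.mem_ofPred_eq, ← segment_eq_uIcc, segment_eq_image]
  simp [eq_comm]

lemma mem_interior_hStrip {z w : ℂ} {θ : ℝ} (hz : z.im ≠ 0) (hθ : θ ∈ Set.Ioo (0 : ℝ) 1)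
    (hw : w.im = θ * z.im) : w ∈ interior (hStrip z) := by
  change w ∈ interior (im ⁻¹' _)
  rw [interior_preimage_im, Set.uIcc, interior_Icc, Set.mem_preimage, hw]
  obtain ⟨h0, h1⟩ := hθ
  rcases lt_or_gt_of_ne hz with h | h
  · rw [inf_of_le_right h.le, sup_of_le_left h.le]
    constructor <;> nlinarith
  · rw [inf_of_le_left h.le, sup_of_le_right h.le]
    constructor <;> nlinarith

lemma isOpenMap_add_ofReal (s : ℝ) : IsOpenMap fun w : ℂ => w + s :=
  isOpenMap_add_right _

variable {E : Type*} [NormedAddCommGroup E] [NormedSpace ℂ E] {f g : ℂ → E} {z : ℂ} {S : Set ℂ}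

lemma IsRegularOn.sub (hf : IsRegularOn f S) (hg : IsRegularOn g S) :
    IsRegularOn (fun w => f w - g w) S :=
  ⟨hf.1.sub hg.1, hf.2.sub hg.2⟩

lemma IsRegularOn.clm_comp (T : E →L[ℂ] E) (hf : IsRegularOn f S) :
    IsRegularOn (fun w => T (f w)) S :=
  ⟨T.continuous.comp_continuousOn hf.1, T.differentiable.comp_differentiableOn hf.2⟩

lemma IsRegularOn.comp_add_ofReal (hf : IsRegularOn f (hStrip z)) (s : ℝ) :
    IsRegularOn (fun w => f (w + s)) (hStrip z) := by
  refine ⟨hf.1.comp (by fun_prop) fun w hw => add_ofReal_mem_hStrip hw s,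
    hf.2.comp (by fun_prop) ?_⟩
  exact fun w hw => (isOpenMap_add_ofReal s).mapsTo_interior
    (fun w hw => add_ofReal_mem_hStrip hw s) hw

/-- Pulling back along a map of the vertical unit strip into a horizontal strip. -/
lemma IsRegularOn.diffContOnCl_comp (hf : IsRegularOn f (hStrip z)) (hz : z.im ≠ 0) {φ : ℂ → ℂ}
    (hφ : DifferentiableOn ℂ φ (re ⁻¹' Set.Icc 0 1))
    (hcl : ∀ ζ : ℂ, ζ.re ∈ Set.Icc (0 : ℝ) 1 → ∃ θ ∈ Set.Icc (0 : ℝ) 1, (φ ζ).im = θ * z.im)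
    (hint : ∀ ζ : ℂ, ζ.re ∈ Set.Ioo (0 : ℝ) 1 → ∃ θ ∈ Set.Ioo (0 : ℝ) 1, (φ ζ).im = θ * z.im) :
    DiffContOnCl ℂ (f ∘ φ) (re ⁻¹' Set.Ioo 0 1) := by
  refine ⟨hf.2.comp (hφ.mono (preimage_mono Ioo_subset_Icc_self)) ?_, ?_⟩
  · intro ζ hζ
    obtain ⟨θ, hθ, h⟩ := hint ζ hζ
    exact mem_interior_hStrip hz hθ h
  · rw [closure_preimage_re, closure_Ioo zero_ne_one]
    exact hf.1.comp hφ.continuousOn fun ζ hζ => mem_hStrip_iff_exists.2 (hcl ζ hζ)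

/-- The maximum principle on a strip. -/
lemma IsRegularOn.norm_le_of_boundary (hf : IsRegularOn f (hStrip z)) {B C : ℝ}
    (hB : ∀ w ∈ hStrip z, ‖f w‖ ≤ B) (h0 : ∀ s : ℝ, ‖f s‖ ≤ C) (h1 : ∀ s : ℝ, ‖f (z + s)‖ ≤ C)
    {w : ℂ} (hw : w ∈ hStrip z) : ‖f w‖ ≤ C := by
  have him0 : ∀ w : ℂ, w.im = 0 → ‖f w‖ ≤ C := fun w hw => by
    have : w = (w.re : ℂ) := Complex.ext (by simp) (by simp [hw])
    rw [this]; exact h0 _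
  have him1 : ∀ w : ℂ, w.im = z.im → ‖f w‖ ≤ C := fun w hw => by
    have : w = z + ((w.re - z.re : ℝ) : ℂ) := Complex.ext (by simp) (by simp [hw])
    rw [this]; exact h1 _
  obtain ⟨θ, hθ, hwθ⟩ := mem_hStrip_iff_exists.1 hw
  rcases eq_or_ne z.im 0 with hz | hz
  · exact him0 w (by simp [hwθ, hz])
  set φ : ℂ → ℂ := fun ζ => ζ * (z.im * I) with hφ
  have hφim : ∀ ζ, (φ ζ).im = ζ.re * z.im := fun ζ => by simp [hφ]
  have key : ∀ ζ : ℂ, 0 ≤ ζ.re → ζ.re ≤ 1 → ‖(f ∘ φ) ζ‖ ≤ C := by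
    intro ζ hζ0 hζ1
    refine PhragmenLindelof.vertical_strip
      (hf.diffContOnCl_comp hz (by fun_prop) (fun ζ hζ => ⟨_, hζ, hφim ζ⟩)
        fun ζ hζ => ⟨_, hζ, hφim ζ⟩) ?_
      (fun ζ hζ => him0 _ (by simp [hφim, hζ])) (fun ζ hζ => him1 _ (by simp [hφim, hζ])) hζ0 hζ1
    refine ⟨0, by positivity, 0, ?_⟩
    refine Asymptotics.IsBigO.of_bound B ?_
    filter_upwards [mem_inf_of_right (mem_principal_self _)] with ζ hζ
    simpa using hB _ (mem_hStrip_iff_exists.2 ⟨_, Ioo_subset_Icc_self hζ, hφim ζ⟩)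
  have hzI : (z.im * I : ℂ) ≠ 0 := by simpa using hz
  have := key (w / (z.im * I)) ?_ ?_
  · simpa only [Function.comp_apply, hφ, div_mul_cancel₀ w hzI] using this
  all_goals
    have : (w / (z.im * I)).re = θ := by
      have h2 := hφim (w / (z.im * I))
      simp only [hφ] at h2
      rw [div_mul_cancel₀ _ hzI, hwθ] at h2
      exact (mul_right_cancel₀ hz h2).symm
    rw [this]
  exacts [hθ.1, hθ.2]

/-- A holomorphic map of the vertical unit strip to the horizontal unit strip which is real on the
imaginary axis and bounded. -/
def stripToDisc (ζ : ℂ) : ℂ := 2 / (1 + cexp (-(Real.pi / 2 * I * ζ)))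

lemma stripToDisc_exp_re (ζ : ℂ) :
    (cexp (-(Real.pi / 2 * I * ζ))).re =
      Real.exp (Real.pi / 2 * ζ.im) * Real.cos (Real.pi / 2 * ζ.re) := by
  simp [Complex.exp_re, ← Complex.ofReal_ofNat, ← Complex.ofReal_div]

lemma stripToDisc_exp_im (ζ : ℂ) :
    (cexp (-(Real.pi / 2 * I * ζ))).im =
      -(Real.exp (Real.pi / 2 * ζ.im) * Real.sin (Real.pi / 2 * ζ.re)) := by
  simp [Complex.exp_im, ← Complex.ofReal_ofNat, ← Complex.ofReal_div]

lemma one_le_stripToDisc_denom_re {ζ : ℂ} (hζ : ζ.re ∈ Set.Icc (0 : ℝ) 1) :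
    1 ≤ (1 + cexp (-(Real.pi / 2 * I * ζ))).re := by
  have : 0 ≤ Real.cos (Real.pi / 2 * ζ.re) :=
    Real.cos_nonneg_of_mem_Icc ⟨by nlinarith [Real.pi_pos, hζ.1], by nlinarith [Real.pi_pos, hζ.2]⟩
  rw [add_re, one_re, stripToDisc_exp_re]
  have := mul_nonneg (Real.exp_pos (Real.pi / 2 * ζ.im)).le this
  linarith

lemma stripToDisc_denom_ne_zero {ζ : ℂ} (hζ : ζ.re ∈ Set.Icc (0 : ℝ) 1) :
    1 + cexp (-(Real.pi / 2 * I * ζ)) ≠ 0 := fun h => by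
  have := one_le_stripToDisc_denom_re hζ
  rw [h] at this
  norm_num at this

lemma differentiableOn_stripToDisc : DifferentiableOn ℂ stripToDisc (re ⁻¹' Set.Icc 0 1) := by
  intro ζ hζ
  have hd : Differentiable ℂ fun ζ : ℂ => 1 + cexp (-(Real.pi / 2 * I * ζ)) := by fun_prop
  exact ((differentiableAt_const _).div (hd ζ)
    (stripToDisc_denom_ne_zero hζ)).differentiableWithinAt

lemma norm_stripToDisc_le {ζ : ℂ} (hζ : ζ.re ∈ Set.Icc (0 : ℝ) 1) : ‖stripToDisc ζ‖ ≤ 2 := by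
  rw [stripToDisc, norm_div, Complex.norm_ofNat]
  exact div_le_self (by norm_num)
    ((one_le_stripToDisc_denom_re hζ).trans (Complex.re_le_norm _))

lemma stripToDisc_im (ζ : ℂ) : (stripToDisc ζ).im =
    2 * (Real.exp (Real.pi / 2 * ζ.im) * Real.sin (Real.pi / 2 * ζ.re)) /
      ((1 + Real.exp (Real.pi / 2 * ζ.im) * Real.cos (Real.pi / 2 * ζ.re)) ^ 2 +
        (Real.exp (Real.pi / 2 * ζ.im) * Real.sin (Real.pi / 2 * ζ.re)) ^ 2) := by
  simp only [stripToDisc, Complex.div_im, Complex.normSq_apply, add_re, add_im, one_re, one_im,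
    stripToDisc_exp_re, stripToDisc_exp_im]
  norm_num
  ring

lemma stripToDisc_im_mem_Icc {ζ : ℂ} (hζ : ζ.re ∈ Set.Icc (0 : ℝ) 1) :
    (stripToDisc ζ).im ∈ Set.Icc (0 : ℝ) 1 := by
  have hc : 0 ≤ Real.cos (Real.pi / 2 * ζ.re) :=
    Real.cos_nonneg_of_mem_Icc ⟨by nlinarith [Real.pi_pos, hζ.1], by nlinarith [Real.pi_pos, hζ.2]⟩
  have hs : 0 ≤ Real.sin (Real.pi / 2 * ζ.re) :=
    Real.sin_nonneg_of_mem_Icc ⟨by nlinarith [Real.pi_pos, hζ.1], by nlinarith [Real.pi_pos, hζ.2]⟩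
  rw [stripToDisc_im]
  have he := Real.exp_pos (Real.pi / 2 * ζ.im)
  set e := Real.exp (Real.pi / 2 * ζ.im)
  have h1 := mul_nonneg he.le hc
  have h2 := mul_nonneg he.le hs
  refine ⟨by positivity, (div_le_one (by positivity)).2 ?_⟩
  have h3 := Real.sin_sq_add_cos_sq (Real.pi / 2 * ζ.re)
  nlinarith [sq_nonneg (e * Real.sin (Real.pi / 2 * ζ.re) - 1)]

lemma stripToDisc_im_mem_Ioo {ζ : ℂ} (hζ : ζ.re ∈ Set.Ioo (0 : ℝ) 1) :
    (stripToDisc ζ).im ∈ Set.Ioo (0 : ℝ) 1 := by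
  have hc : 0 < Real.cos (Real.pi / 2 * ζ.re) :=
    Real.cos_pos_of_mem_Ioo ⟨by nlinarith [Real.pi_pos, hζ.1], by nlinarith [Real.pi_pos, hζ.2]⟩
  have hs : 0 < Real.sin (Real.pi / 2 * ζ.re) :=
    Real.sin_pos_of_mem_Ioo ⟨by nlinarith [Real.pi_pos, hζ.1], by nlinarith [Real.pi_pos, hζ.2]⟩
  rw [stripToDisc_im]
  have he := Real.exp_pos (Real.pi / 2 * ζ.im)
  set e := Real.exp (Real.pi / 2 * ζ.im)
  have h1 := mul_pos he hc
  have h2 := mul_pos he hs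
  refine ⟨by positivity, (div_lt_one (by positivity)).2 ?_⟩
  nlinarith [sq_nonneg (e * Real.sin (Real.pi / 2 * ζ.re) - 1)]

lemma stripToDisc_im_of_re_eq_zero {ζ : ℂ} (hζ : ζ.re = 0) : (stripToDisc ζ).im = 0 := by
  simp [stripToDisc_im, hζ]

lemma exists_stripToDisc_im_eq {η : ℝ} (hη : η ∈ Set.Ioo (0 : ℝ) 1) :
    ∃ ζ : ℂ, ζ.re ∈ Set.Ioo (0 : ℝ) 1 ∧ (stripToDisc ζ).im = η := by
  have hcont : ContinuousOn (fun θ : ℝ => (stripToDisc θ).im) (Set.Icc 0 1) :=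
    Complex.continuous_im.comp_continuousOn <|
      differentiableOn_stripToDisc.continuousOn.comp (by fun_prop) fun θ hθ => by simpa using hθ
  have h0 : (stripToDisc ((0 : ℝ) : ℂ)).im = 0 := stripToDisc_im_of_re_eq_zero (by simp)
  have h1 : (stripToDisc ((1 : ℝ) : ℂ)).im = 1 := by norm_num [stripToDisc_im]
  obtain ⟨θ, hθ, h⟩ := intermediate_value_Ioo zero_le_one hcont (by rwa [h0, h1])
  exact ⟨θ, by simpa using hθ, h⟩

/-- A regular function on a strip vanishing on the real axis vanishes identically. -/
lemma IsRegularOn.eq_zero_of_real (hf : IsRegularOn f (hStrip z)) (h0 : ∀ s : ℝ, f s = 0)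
    {w : ℂ} (hw : w ∈ hStrip z) : f w = 0 := by
  have him0 : ∀ w : ℂ, w.im = 0 → f w = 0 := fun w hw => by
    have : w = (w.re : ℂ) := Complex.ext (by simp) (by simp [hw])
    rw [this]; exact h0 _
  rcases eq_or_ne z.im 0 with hz | hz
  · obtain ⟨θ, -, hwθ⟩ := mem_hStrip_iff_exists.1 hw
    exact him0 w (by simp [hwθ, hz])
  have hint : ∀ w ∈ interior (hStrip z), f w = 0 := by
    intro w hw
    obtain ⟨θ, hθ, hwθ⟩ : ∃ θ ∈ Set.Ioo (0 : ℝ) 1, w.im = θ * z.im := by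
      change w ∈ interior (im ⁻¹' _) at hw
      rw [interior_preimage_im, Set.uIcc, interior_Icc, Set.mem_preimage] at hw
      refine ⟨w.im / z.im, ?_, (div_mul_cancel₀ _ hz).symm⟩
      rcases lt_or_gt_of_ne hz with h | h
      · rw [inf_of_le_right h.le, sup_of_le_left h.le] at hw
        exact ⟨div_pos_of_neg_of_neg hw.2 h, (div_lt_one_of_neg h).2 hw.1⟩
      · rw [inf_of_le_left h.le, sup_of_le_right h.le] at hw
        exact ⟨div_pos hw.1 h, (div_lt_one h).2 hw.2⟩
    obtain ⟨ζ₀, hζ₀, hζ₀θ⟩ := exists_stripToDisc_im_eq hθ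
    set x : ℝ := w.re - z.im * (stripToDisc ζ₀).re
    set φ : ℂ → ℂ := fun ζ => x + z.im * stripToDisc ζ with hφ
    have hφim : ∀ ζ, (φ ζ).im = (stripToDisc ζ).im * z.im := fun ζ => by simp [hφ, mul_comm]
    have hw' : φ ζ₀ = w := by
      refine Complex.ext ?_ ?_
      · simp [hφ, x]
      · rw [hφim, hζ₀θ, hwθ]
    have hφd : DifferentiableOn ℂ φ (re ⁻¹' Set.Icc 0 1) :=
      (differentiableOn_stripToDisc.const_mul _).const_add _
    have hbdd : BddAbove ((norm ∘ (f ∘ φ)) '' HadamardThreeLines.verticalClosedStrip 0 1) := by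
      have hK : IsCompact (hStrip z ∩ Metric.closedBall (x : ℂ) (‖(z.im : ℂ)‖ * 2)) := by
        refine (isCompact_closedBall _ _).inter_left ?_
        exact isClosed_Icc.preimage Complex.continuous_im
      obtain ⟨C, hC⟩ := hK.exists_bound_of_continuousOn (hf.1.mono inter_subset_left)
      refine ⟨C, ?_⟩
      rintro _ ⟨ζ, hζ, rfl⟩
      refine hC _ ⟨mem_hStrip_iff_exists.2 ⟨_, stripToDisc_im_mem_Icc hζ, hφim ζ⟩, ?_⟩
      rw [mem_closedBall_iff_norm, hφ, add_sub_cancel_left, norm_mul]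
      exact mul_le_mul_of_nonneg_left (norm_stripToDisc_le hζ) (norm_nonneg _)
    obtain ⟨C, hC⟩ := id hbdd
    have := HadamardThreeLines.norm_le_interp_of_mem_verticalClosedStrip₀₁' (f ∘ φ) (z := ζ₀)
      (a := 0) (b := C) (Ioo_subset_Icc_self hζ₀)
      (hf.diffContOnCl_comp hz hφd (fun ζ hζ => ⟨_, stripToDisc_im_mem_Icc hζ, hφim ζ⟩)
        fun ζ hζ => ⟨_, stripToDisc_im_mem_Ioo hζ, hφim ζ⟩) hbdd
      (fun ζ hζ => by
        rw [Function.comp_apply, him0 (φ ζ) (by rw [hφim, stripToDisc_im_of_re_eq_zero hζ, zero_mul]),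
          norm_zero])
      (fun ζ hζ => hC ⟨ζ, by
        rw [HadamardThreeLines.verticalClosedStrip, Set.mem_preimage, show ζ.re = 1 from hζ]
        exact ⟨zero_le_one, le_rfl⟩, rfl⟩)
    rw [Real.zero_rpow (by linarith [hζ₀.2]), zero_mul, Function.comp_apply, hw'] at this
    exact norm_le_zero_iff.1 this
  have hcl : hStrip z ⊆ closure (interior (hStrip z)) := by
    change im ⁻¹' _ ⊆ closure (interior (im ⁻¹' _))
    rw [interior_preimage_im, closure_preimage_im, Set.uIcc, interior_Icc, closure_Ioo]
    simpa [eq_comm] using hz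
  exact (Set.EqOn.of_subset_closure (s := interior (hStrip z)) (g := fun _ => (0 : E)) hint
    hf.1 continuousOn_const interior_subset hcl) hw

/-- Regular functions on a strip are determined by their values on the real axis. -/
lemma IsRegularOn.eq_of_real (hf : IsRegularOn f (hStrip z)) (hg : IsRegularOn g (hStrip z))
    (h : ∀ s : ℝ, f s = g s) {w : ℂ} (hw : w ∈ hStrip z) : f w = g w :=
  sub_eq_zero.1 ((hf.sub hg).eq_zero_of_real (fun s => sub_eq_zero.2 (h s)) hw)

end Strip

section Rep

variable {E : Type*} [NormedAddCommGroup E] [NormedSpace ℂ E] {α β : ℝ → E →L[ℂ] E}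

lemma IsOneParamRep.norm_apply_le (hα : IsOneParamRep α) (t : ℝ) (a : E) : ‖α t a‖ ≤ ‖a‖ := by
  simpa using (α t).le_of_opNorm_le (hα.norm_le t) a

lemma IsOneParamRep.apply_add (hα : IsOneParamRep α) (s t : ℝ) (a : E) :
    α (s + t) a = α s (α t a) := by
  rw [hα.map_add]; rfl

lemma IsOneParamRep.comp (hα : IsOneParamRep α) (hβ : IsOneParamRep β)
    (hcomm : ∀ s t : ℝ, (α s).comp (β t) = (β t).comp (α s)) :
    IsOneParamRep fun t => (α t).comp (β t) where
  map_add s t := by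
    ext a
    have := DFunLike.congr_fun (hcomm t s) (β t a)
    simp only [ContinuousLinearMap.comp_apply] at this ⊢
    rw [hα.apply_add, hβ.apply_add, this]
  map_zero := by simp [hα.map_zero, hβ.map_zero]
  norm_le t := (ContinuousLinearMap.opNorm_comp_le _ _).trans
    (mul_le_one₀ (hα.norm_le t) (norm_nonneg _) (hβ.norm_le t))
  strong_cont a := by
    refine continuous_iff_continuousAt.2 fun t => ?_
    have h1 : Tendsto (fun s => α s (β t a)) (𝓝 t) (𝓝 (α t (β t a))) :=
      (hα.strong_cont (β t a)).tendsto t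
    have h2 : Tendsto (fun s => α s (β s a - β t a)) (𝓝 t) (𝓝 0) := by
      refine squeeze_zero_norm (fun s => hα.norm_apply_le s _) ?_
      have := (((hβ.strong_cont a).sub continuous_const).norm : Continuous fun s =>
        ‖β s a - β t a‖).tendsto t
      simpa using this
    have := h1.add h2
    simpa [ContinuousAt] using this

/-- The orbit map extended to a regular function, translated along the real axis. -/
lemma IsRegularOn.apply_add_ofReal (hα : IsOneParamRep α) {f : ℂ → E} {z : ℂ} {a : E}
    (hf : IsRegularOn f (hStrip z)) (hfa : ∀ t : ℝ, f t = α t a) {w : ℂ} (hw : w ∈ hStrip z)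
    (s : ℝ) : f (w + s) = α s (f w) := by
  refine (hf.comp_add_ofReal s).eq_of_real (hf.clm_comp (α s)) (fun t => ?_) hw
  rw [hfa, ← ofReal_add, hfa, add_comm, hα.apply_add]

lemma IsRegularOn.norm_le_max_of_orbit (hα : IsOneParamRep α) {f : ℂ → E} {z : ℂ} {a : E}
    (hf : IsRegularOn f (hStrip z)) (hfa : ∀ t : ℝ, f t = α t a) {w : ℂ} (hw : w ∈ hStrip z) :
    ‖f w‖ ≤ max ‖a‖ ‖f z‖ := by
  have hK : IsCompact ((fun y : ℝ => (y : ℂ) * I) '' Set.uIcc 0 z.im) :=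
    isCompact_uIcc.image (by fun_prop)
  have hsub : (fun y : ℝ => (y : ℂ) * I) '' Set.uIcc 0 z.im ⊆ hStrip z := by
    rintro _ ⟨y, hy, rfl⟩
    simpa [hStrip] using hy
  obtain ⟨B, hB⟩ := hK.exists_bound_of_continuousOn (hf.1.mono hsub)
  refine hf.norm_le_of_boundary (B := B) (fun v hv => ?_) (fun s => ?_) (fun s => ?_) hw
  · have hmem := Set.mem_image_of_mem (fun y : ℝ => (y : ℂ) * I) hv
    have : v = (v.im : ℂ) * I + (v.re : ℝ) := by rw [add_comm, re_add_im]
    rw [this, hf.apply_add_ofReal hα hfa (hsub hmem)]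
    exact (hα.norm_apply_le _ _).trans (hB _ hmem)
  · rw [hfa]
    exact (hα.norm_apply_le _ _).trans (le_max_left _ _)
  · rw [hf.apply_add_ofReal hα hfa (self_mem_hStrip z)]
    exact (hα.norm_apply_le _ _).trans (le_max_right _ _)

/-- The analytic continuation of a one-parameter representation has a closed graph. -/
lemma IsOneParamRep.isClosed_graph [CompleteSpace E] (hα : IsOneParamRep α) (z : ℂ) :
    IsClosed {p : E × E | HasContVal α z p.1 p.2} := by
  refine IsSeqClosed.isClosed fun p q hp hpq => ?_
  choose f hfc hfd hfa hfz using hp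
  have hf : ∀ n, IsRegularOn (f n) (hStrip z) := fun n => ⟨hfc n, hfd n⟩
  have hdist : ∀ m n, ∀ w ∈ hStrip z, dist (f m w) (f n w) ≤ dist (p m) (p n) := by
    intro m n w hw
    have := ((hf m).sub (hf n)).norm_le_max_of_orbit hα (a := (p m).1 - (p n).1)
      (fun t => by rw [hfa, hfa, map_sub]) hw
    rwa [hfz, hfz, ← dist_eq_norm, ← dist_eq_norm, ← dist_eq_norm, ← Prod.dist_eq] at this
  have hcauchy : UniformCauchySeqOn f atTop (hStrip z) := by
    refine Metric.uniformCauchySeqOn_iff.2 fun ε hε => ?_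
    obtain ⟨N, hN⟩ := Metric.cauchySeq_iff.1 hpq.cauchySeq ε hε
    exact ⟨N, fun m hm n hn w hw => (hdist m n w hw).trans_lt (hN m hm n hn)⟩
  have hlim : ∀ w ∈ hStrip z, ∃ l, Tendsto (fun n => f n w) atTop (𝓝 l) := fun w hw =>
    cauchySeq_tendsto_of_complete (hcauchy.cauchySeq hw)
  choose! g hg using hlim
  have hunif : TendstoUniformlyOn f g atTop (hStrip z) :=
    hcauchy.tendstoUniformlyOn_of_tendsto hg
  refine ⟨g, hunif.continuousOn (Frequently.of_forall hfc),
    (hunif.mono interior_subset).tendstoLocallyUniformlyOn.differentiableOn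
      (Eventually.of_forall hfd) isOpen_interior, fun t => ?_, ?_⟩
  · refine tendsto_nhds_unique (hg t (ofReal_mem_hStrip z t)) ?_
    simp only [hfa]
    exact ((α t).continuous.tendsto _).comp ((continuous_fst.tendsto _).comp hpq)
  · refine tendsto_nhds_unique (hg z (self_mem_hStrip z)) ?_
    simp only [hfz]
    exact (continuous_snd.tendsto _).comp hpq

end Rep

section Smear

/-- The Gaussian density `s ↦ exp (-s²) / √π`, as an entire function. -/
def gaussKernel (s : ℂ) : ℂ := (√Real.pi)⁻¹ * cexp (-s ^ 2)

lemma differentiable_gaussKernel : Differentiable ℂ gaussKernel := by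
  unfold gaussKernel; fun_prop

lemma integral_gaussKernel : ∫ t : ℝ, gaussKernel t = 1 := by
  have h : ∀ t : ℝ, gaussKernel t = (((√Real.pi)⁻¹ * Real.exp (-1 * t ^ 2) : ℝ) : ℂ) := by
    intro t; simp [gaussKernel]
  simp only [h]
  rw [integral_complex_ofReal, integral_const_mul, integral_gaussian]
  simp [Real.sqrt_ne_zero'.2 Real.pi_pos]

/-- A Gaussian majorant for translates of the kernel. -/
def gaussBound (r t : ℝ) : ℝ := (√Real.pi)⁻¹ * Real.exp (r ^ 2) * Real.exp (-(1 / 2) * t ^ 2)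

lemma integrable_gaussBound (r : ℝ) : Integrable (gaussBound r) :=
  (integrable_exp_neg_mul_sq (by norm_num)).const_mul _

lemma gaussBound_nonneg (r t : ℝ) : 0 ≤ gaussBound r t := by
  unfold gaussBound; positivity

lemma norm_gaussKernel_sub_le {r : ℝ} {w : ℂ} (hw : ‖w‖ ≤ r) (t : ℝ) :
    ‖gaussKernel (t - w)‖ ≤ gaussBound r t := by
  have h1 : ‖w‖ ^ 2 = w.re * w.re + w.im * w.im := by rw [Complex.sq_norm, normSq_apply]
  have h2 : ‖w‖ ^ 2 ≤ r ^ 2 := pow_le_pow_left₀ (norm_nonneg _) hw 2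
  rw [gaussKernel, gaussBound, norm_mul, Complex.norm_exp, mul_assoc, ← Real.exp_add]
  have h3 : ‖(((√Real.pi)⁻¹ : ℝ) : ℂ)‖ = (√Real.pi)⁻¹ := by
    rw [Complex.norm_real, Real.norm_of_nonneg (by positivity)]
  rw [h3]
  refine mul_le_mul_of_nonneg_left (Real.exp_le_exp.2 ?_) (by positivity)
  simp only [sq, neg_re, mul_re, sub_re, sub_im, ofReal_re, ofReal_im]
  nlinarith [sq_nonneg (t - 2 * w.re)]

variable {E : Type*} [NormedAddCommGroup E] [NormedSpace ℂ E] {α β : ℝ → E →L[ℂ] E}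

/-- The Gaussian smearing `v ↦ n/√π ∫ exp (-n² (t - w)²) α_t v dt`, after rescaling `t`. -/
def smear (α : ℝ → E →L[ℂ] E) (n : ℝ) (w : ℂ) (v : E) : E :=
  ∫ t : ℝ, gaussKernel (t - n * w) • α (t / n) v

lemma IsOneParamRep.continuous_smear_integrand (hα : IsOneParamRep α) (n : ℝ) (w : ℂ) (v : E) :
    Continuous fun t : ℝ => gaussKernel (t - n * w) • α (t / n) v :=
  (differentiable_gaussKernel.continuous.comp (by fun_prop)).smul
    ((hα.strong_cont v).comp (by fun_prop))

lemma IsOneParamRep.norm_smear_integrand_le (hα : IsOneParamRep α) {n : ℝ} {w : ℂ} {v : E}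
    {r C : ℝ} (hw : ‖w‖ ≤ r) (hv : ‖v‖ ≤ C) (t : ℝ) :
    ‖gaussKernel (t - n * w) • α (t / n) v‖ ≤ gaussBound (|n| * r) t * C := by
  rw [norm_smul]
  refine mul_le_mul (norm_gaussKernel_sub_le ?_ t) ((hα.norm_apply_le _ _).trans hv)
    (norm_nonneg _) (gaussBound_nonneg _ _)
  rw [norm_mul, Complex.norm_real, Real.norm_eq_abs]
  exact mul_le_mul_of_nonneg_left hw (abs_nonneg _)

lemma IsOneParamRep.integrable_smear (hα : IsOneParamRep α) (n : ℝ) (w : ℂ) (v : E) :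
    Integrable fun t : ℝ => gaussKernel (t - n * w) • α (t / n) v :=
  ((integrable_gaussBound (|n| * ‖w‖)).mul_const ‖v‖).mono'
    (hα.continuous_smear_integrand n w v).aestronglyMeasurable
    (Eventually.of_forall (hα.norm_smear_integrand_le le_rfl le_rfl))

lemma IsOneParamRep.smear_clm_comm [CompleteSpace E] (hα : IsOneParamRep α) {T : E →L[ℂ] E}
    (hT : ∀ t, T.comp (α t) = (α t).comp T) (n : ℝ) (w : ℂ) (v : E) :
    T (smear α n w v) = smear α n w (T v) := by
  rw [smear, ← T.integral_comp_comm (hα.integrable_smear n w v)]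
  refine integral_congr_ae (Eventually.of_forall fun t => ?_)
  have := DFunLike.congr_fun (hT (t / n)) v
  simp only [ContinuousLinearMap.comp_apply] at this
  simp only [map_smul, this]

lemma IsOneParamRep.self_comm (hα : IsOneParamRep α) (s t : ℝ) :
    (α s).comp (α t) = (α t).comp (α s) := by
  rw [← hα.map_add, ← hα.map_add, add_comm]

lemma IsOneParamRep.smear_ofReal [CompleteSpace E] (hα : IsOneParamRep α) {n : ℝ} (hn : n ≠ 0)
    (s : ℝ) (v : E) : smear α n s v = α s (smear α n 0 v) := by
  rw [hα.smear_clm_comm (hα.self_comm s), smear, smear,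
    ← integral_add_right_eq_self _ (n * s)]
  refine integral_congr_ae (Eventually.of_forall fun t => ?_)
  have : (t + n * s) / n = t / n + s := by field_simp
  simp only [this, hα.apply_add]
  simp

lemma IsOneParamRep.tendsto_smear_zero (hα : IsOneParamRep α) (v : E) [CompleteSpace E] :
    Tendsto (fun n : ℕ => smear α (n + 1) 0 v) atTop (𝓝 v) := by
  have hv : ∫ t : ℝ, gaussKernel t • v = v := by
    rw [integral_smul_const, integral_gaussKernel, one_smul]
  nth_rewrite 2 [← hv]
  have hb : ∀ t : ℝ, ‖gaussKernel t‖ ≤ gaussBound 0 t := fun t => by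
    simpa using norm_gaussKernel_sub_le (r := 0) (w := 0) (by simp) t
  refine tendsto_integral_of_dominated_convergence (fun t => gaussBound 0 t * ‖v‖)
    (fun n => ?_) ((integrable_gaussBound 0).mul_const _) (fun n => ?_) ?_
  · exact_mod_cast (hα.continuous_smear_integrand (n + 1) 0 v).aestronglyMeasurable
  · refine Eventually.of_forall fun t => ?_
    have := hα.norm_smear_integrand_le (n := n + 1) (w := 0) (r := 0) (by simp) (le_refl ‖v‖) t
    simpa using this
  · refine Eventually.of_forall fun t => ?_
    simp only [mul_zero, sub_zero]
    refine Tendsto.const_smul ?_ _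
    have h0 : Tendsto (fun n : ℕ => t / ((n : ℝ) + 1)) atTop (𝓝 0) :=
      tendsto_const_nhds.div_atTop
        (tendsto_atTop_add_const_right _ _ tendsto_natCast_atTop_atTop)
    have := ((hα.strong_cont v).tendsto 0).comp h0
    simpa [hα.map_zero, Function.comp_def] using this

/-- Smearing with a moving centre preserves regularity. -/
lemma IsRegularOn.smear [CompleteSpace E] (hα : IsOneParamRep α) {f : ℂ → E} {S : Set ℂ}
    (hf : IsRegularOn f S) (n : ℝ) : IsRegularOn (fun w => smear α n w (f w)) S := by
  have hbound : ∀ (s : Set ℂ) (w₀ : ℂ), ContinuousWithinAt f s w₀ →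
      ∀ᶠ w in 𝓝[s] w₀, ∀ t : ℝ, ‖gaussKernel (t - n * w) • α (t / n) (f w)‖ ≤
        gaussBound (|n| * (‖w₀‖ + 1)) t * (‖f w₀‖ + 1) := by
    intro s w₀ hw₀
    have h1 : ∀ᶠ w in 𝓝[s] w₀, ‖w‖ < ‖w₀‖ + 1 :=
      (continuous_norm.continuousWithinAt (s := s) (x := w₀)).eventually_lt_const (by linarith)
    have h2 : ∀ᶠ w in 𝓝[s] w₀, ‖f w‖ < ‖f w₀‖ + 1 :=
      hw₀.norm.eventually_lt_const (by linarith)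
    filter_upwards [h1, h2] with w h1 h2 t
    exact hα.norm_smear_integrand_le h1.le h2.le t
  refine ⟨fun w₀ hw₀ => ?_, fun w₀ hw₀ => ?_⟩
  · refine tendsto_integral_filter_of_dominated_convergence
      (fun t => gaussBound (|n| * (‖w₀‖ + 1)) t * (‖f w₀‖ + 1)) ?_ ?_
      ((integrable_gaussBound _).mul_const _) ?_
    · exact Eventually.of_forall fun w =>
        (hα.continuous_smear_integrand n w (f w)).aestronglyMeasurable
    · filter_upwards [hbound S w₀ (hf.1 w₀ hw₀)] with w hw
      exact Eventually.of_forall hw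
    · refine Eventually.of_forall fun t => ?_
      refine Tendsto.smul ?_ (((α (t / n)).continuous.tendsto _).comp (hf.1 w₀ hw₀))
      exact ((differentiable_gaussKernel.continuous.comp (by fun_prop : Continuous fun w : ℂ =>
        (t : ℂ) - n * w)).tendsto w₀).mono_left nhdsWithin_le_nhds
  · have hfw : ∀ w ∈ interior S, DifferentiableAt ℂ f w := fun w hw =>
      hf.2.differentiableAt (isOpen_interior.mem_nhds hw)
    have hb := hbound Set.univ w₀ (hfw w₀ hw₀).continuousAt.continuousWithinAt
    rw [nhdsWithin_univ] at hb
    obtain ⟨R, hR, hball⟩ := Metric.nhds_basis_closedBall.mem_iff.1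
      (hb.and (isOpen_interior.mem_nhds hw₀))
    have hH : ∀ t : ℝ, ∀ w ∈ interior S, HasDerivAt
        (fun w => gaussKernel (t - n * w) • α (t / n) (f w))
        (gaussKernel (t - n * w) • α (t / n) (deriv f w) +
          (deriv gaussKernel (t - n * w) * (-n)) • α (t / n) (f w)) w := by
      intro t w hw
      have h1 : HasDerivAt (fun w : ℂ => (t : ℂ) - n * w) (-n) w := by
        simpa using ((hasDerivAt_id w).const_mul (n : ℂ)).const_sub (t : ℂ)
      have h2 := (differentiable_gaussKernel (t - n * w)).hasDerivAt.comp w h1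
      exact h2.smul ((α (t / n)).hasFDerivAt.comp_hasDerivAt w (hfw w hw).hasDerivAt)
    have hmeas : ∀ w, Continuous fun t : ℝ =>
        (gaussKernel (t - n * w) • α (t / n) (deriv f w) +
          (deriv gaussKernel (t - n * w) * (-n)) • α (t / n) (f w)) := by
      intro w
      refine (hα.continuous_smear_integrand n w _).add (Continuous.smul ?_
        ((hα.strong_cont _).comp (by fun_prop)))
      have hd : Continuous (deriv gaussKernel) :=
        (differentiable_gaussKernel.contDiff (n := 1)).continuous_deriv le_rfl
      exact (hd.comp (by fun_prop : Continuous fun t : ℝ => (t : ℂ) - n * w)).mul continuous_const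
    refine (hasDerivAt_integral_of_dominated_loc_of_deriv_le
      (F' := fun w t => gaussKernel (t - n * w) • α (t / n) (deriv f w) +
        (deriv gaussKernel (t - n * w) * (-n)) • α (t / n) (f w))
      (bound := fun t => gaussBound (|n| * (‖w₀‖ + 1)) t * (‖f w₀‖ + 1) / (R / 2))
      (Metric.ball_mem_nhds w₀ (half_pos hR)) ?_ (hα.integrable_smear n w₀ (f w₀))
      (hmeas w₀).aestronglyMeasurable ?_ (((integrable_gaussBound _).mul_const _).div_const _)
      ?_).2.differentiableAt.differentiableWithinAt
    · exact Eventually.of_forall fun w =>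
        (hα.continuous_smear_integrand n w (f w)).aestronglyMeasurable
    · refine Eventually.of_forall fun t w hw => ?_
      have hsub : Metric.closedBall w (R / 2) ⊆ Metric.closedBall w₀ R :=
        Metric.closedBall_subset_closedBall' (by linarith [Metric.mem_ball.1 hw])
      rw [← (hH t w (hball (hsub (Metric.mem_closedBall_self (by positivity)))).2).deriv]
      refine norm_deriv_le_of_forall_mem_sphere_norm_le (half_pos hR) ?_ fun v hv =>
        (hball (hsub (Metric.sphere_subset_closedBall hv))).1 t
      refine DifferentiableOn.diffContOnCl fun v hv => ?_
      rw [closure_ball _ (half_pos hR).ne'] at hv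
      exact (hH t v (hball (hsub hv)).2).differentiableAt.differentiableWithinAt
    · refine Eventually.of_forall fun t w hw => hH t w (hball ?_).2
      exact Metric.ball_subset_closedBall (Metric.ball_subset_ball (by linarith) hw)

end Smear

section Composition

variable {E : Type*} [NormedAddCommGroup E] [NormedSpace ℂ E] {α β : ℝ → E →L[ℂ] E}

lemma IsRegularOn.const {S : Set ℂ} (v : E) : IsRegularOn (fun _ => v) S :=
  ⟨continuousOn_const, differentiableOn_const _⟩

lemma IsRegularOn.hasContVal {f : ℂ → E} {z : ℂ} {a : E} (hf : IsRegularOn f (hStrip z))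
    (hfa : ∀ t : ℝ, f t = α t a) : HasContVal α z a (f z) :=
  ⟨f, hf.1, hf.2, hfa, rfl⟩

lemma IsOneParamRep.exists_clm_eq_smear (hα : IsOneParamRep α) (n : ℝ) (w : ℂ) :
    ∃ T : E →L[ℂ] E, ∀ v, T v = smear α n w v := by
  let L : E →ₗ[ℂ] E :=
    { toFun := smear α n w
      map_add' := fun u v => by
        simp only [smear, _root_.map_add, smul_add]
        exact integral_add (hα.integrable_smear n w u) (hα.integrable_smear n w v)
      map_smul' := fun c v => by
        simp only [smear, map_smul, smul_comm _ c, RingHom.id_apply]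
        exact integral_smul _ _ }
  refine ⟨L.mkContinuous (∫ t, gaussBound (|n| * ‖w‖) t) fun v => ?_, fun v => rfl⟩
  rw [← integral_mul_const]
  exact norm_integral_le_of_norm_le ((integrable_gaussBound _).mul_const _)
    (Eventually.of_forall (hα.norm_smear_integrand_le le_rfl le_rfl))

variable [CompleteSpace E]

lemma IsOneParamRep.hasContVal_smear (hα : IsOneParamRep α) {n : ℝ} (hn : n ≠ 0) (z : ℂ) (v : E) :
    HasContVal α z (smear α n 0 v) (smear α n z v) :=
  ((IsRegularOn.const v).smear hα n).hasContVal fun t => hα.smear_ofReal hn t v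

lemma HasContVal.smear_eq (hα : IsOneParamRep α) {n : ℝ} (hn : n ≠ 0) {z : ℂ} {a b : E}
    (h : HasContVal α z a b) : smear α n z a = smear α n 0 b := by
  obtain ⟨f, hfc, hfd, hfa, rfl⟩ := h
  obtain ⟨T, hT⟩ := hα.exists_clm_eq_smear n 0
  rw [← hT]
  refine ((IsRegularOn.const a).smear hα n).eq_of_real
    (IsRegularOn.clm_comp T ⟨hfc, hfd⟩) (fun t => ?_) (self_mem_hStrip z)
  rw [hα.smear_ofReal hn, hα.smear_clm_comm (hα.self_comm t), hfa, hT]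

/-- `α_z ∘ β_z ⊆ γ_z`. -/
lemma HasContVal.comp (hα : IsOneParamRep α) (hβ : IsOneParamRep β)
    (hcomm : ∀ s t : ℝ, (α s).comp (β t) = (β t).comp (α s)) {z : ℂ} {a b c : E}
    (hab : HasContVal β z a b) (hbc : HasContVal α z b c) :
    HasContVal (fun t => (α t).comp (β t)) z a c := by
  have key : ∀ n : ℕ, HasContVal (fun t => (α t).comp (β t)) z
      (smear α (n + 1) 0 a) (smear α (n + 1) 0 c) := by
    intro n
    have hn : (n + 1 : ℝ) ≠ 0 := by positivity
    rw [← hbc.smear_eq hα hn]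
    obtain ⟨f, hfc, hfd, hfa, rfl⟩ := hab
    refine (IsRegularOn.smear hα ⟨hfc, hfd⟩ (n + 1)).hasContVal fun t => ?_
    rw [hα.smear_ofReal hn, hfa, ContinuousLinearMap.comp_apply,
      hα.smear_clm_comm fun s => (hcomm s t).symm]
  exact ((hα.comp hβ hcomm).isClosed_graph z).mem_of_tendsto
    ((hα.tendsto_smear_zero a).prodMk_nhds (hα.tendsto_smear_zero c)) (Eventually.of_forall key)

/-- Smearing with respect to both representations maps the graph of `γ_z` into that of
`α_z ∘ β_z`. -/
lemma HasContVal.exists_smear_smear (hα : IsOneParamRep α) (hβ : IsOneParamRep β)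
    (hcomm : ∀ s t : ℝ, (α s).comp (β t) = (β t).comp (α s)) {z : ℂ} {a c : E}
    (h : HasContVal (fun t => (α t).comp (β t)) z a c) {m n : ℝ} (hm : m ≠ 0) (hn : n ≠ 0) :
    ∃ b, HasContVal β z (smear α n 0 (smear β m 0 a)) b ∧
      HasContVal α z b (smear α n 0 (smear β m 0 c)) := by
  obtain ⟨f, hfc, hfd, hfa, rfl⟩ := h
  obtain ⟨T, hT⟩ := hα.exists_clm_eq_smear n 0
  obtain ⟨U, hU⟩ := hβ.exists_clm_eq_smear m 0
  have hreg : IsRegularOn (fun w => smear β m w a) (hStrip z) := (IsRegularOn.const a).smear hβ m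
  have hβT : ∀ (t : ℝ) (v : E), β t (smear α n 0 v) = smear α n 0 (β t v) := fun t v =>
    hα.smear_clm_comm (fun s => (hcomm s t).symm) n 0 v
  have heq : smear α n z (smear β m z a) = smear α n 0 (smear β m 0 (f z)) := by
    rw [← hU, ← hT]
    refine (hreg.smear hα n).eq_of_real
      ((IsRegularOn.clm_comp U ⟨hfc, hfd⟩).clm_comp T) (fun t => ?_) (self_mem_hStrip z)
    rw [hα.smear_ofReal hn, hβ.smear_ofReal hm, hU, hT, hfa, ContinuousLinearMap.comp_apply,
      ← hβ.smear_clm_comm (hcomm t), ← hβ.smear_clm_comm (hβ.self_comm t),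
      ← hα.smear_clm_comm (hα.self_comm t)]
  refine ⟨smear α n 0 (smear β m z a), ?_, ?_⟩
  · rw [← hT (smear β m z a)]
    refine (hreg.clm_comp T).hasContVal fun t => ?_
    rw [hT, hβ.smear_ofReal hm, hβT]
  · rw [← heq]
    exact hα.hasContVal_smear hn z _

lemma closure_comp_graph_eq (hα : IsOneParamRep α) (hβ : IsOneParamRep β)
    (hcomm : ∀ s t : ℝ, (α s).comp (β t) = (β t).comp (α s)) (z : ℂ) :
    closure {p : E × E | ∃ b, HasContVal β z p.1 b ∧ HasContVal α z b p.2}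
      = {p : E × E | HasContVal (fun t => (α t).comp (β t)) z p.1 p.2} := by
  refine (closure_minimal ?_ ((hα.comp hβ hcomm).isClosed_graph z)).antisymm ?_
  · rintro p ⟨b, h1, h2⟩
    exact h1.comp hα hβ hcomm h2
  · rintro ⟨a, c⟩ h
    refine isClosed_closure.mem_of_tendsto
      ((hβ.tendsto_smear_zero a).prodMk_nhds (hβ.tendsto_smear_zero c))
      (Eventually.of_forall fun m => ?_)
    refine isClosed_closure.mem_of_tendsto
      ((hα.tendsto_smear_zero _).prodMk_nhds (hα.tendsto_smear_zero _))
      (Eventually.of_forall fun n => subset_closure ?_)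
    exact HasContVal.exists_smear_smear hα hβ hcomm h (by positivity) (by positivity)

end Composition

/-- For commuting one-parameter representations `α, β` and `γ_t = α_t β_t`, the compositions
`α_z ∘ β_z` and `β_z ∘ α_z` are closable with the same closure, namely `γ_z`:  the closure of
each composed graph equals the graph of `γ_z`. -/
theorem commuting_composition_closure
    {E : Type*} [NormedAddCommGroup E] [NormedSpace ℂ E] [CompleteSpace E]
    (α β : ℝ → E →L[ℂ] E) (hα : IsOneParamRep α) (hβ : IsOneParamRep β)
    (hcomm : ∀ s t : ℝ, (α s).comp (β t) = (β t).comp (α s)) (z : ℂ) :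
    closure {p : E × E | ∃ b, HasContVal β z p.1 b ∧ HasContVal α z b p.2}
        = {p : E × E | HasContVal (fun t => (α t).comp (β t)) z p.1 p.2} ∧
    closure {p : E × E | ∃ b, HasContVal α z p.1 b ∧ HasContVal β z b p.2}
        = {p : E × E | HasContVal (fun t => (α t).comp (β t)) z p.1 p.2} := by
  refine ⟨closure_comp_graph_eq hα hβ hcomm z, ?_⟩
  have hγ : (fun t => (α t).comp (β t)) = fun t => (β t).comp (α t) := funext fun t => hcomm t t
  rw [hγ]
  exact closure_comp_graph_eq hβ hα (fun s t => (hcomm t s).symm) z
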